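/- Let A, B, C ⊆ ℝ^d with A an affine subspace (as a set), B and C convex, and C ⊆ A. Then A ∩ conv(B ∪ C) = conv((A ∩ B) ∪ C), where conv denotes the convex hull over ℝ. -/

import Mathlib

/-- Intersection of an affine set with the convex hull of the union of two
convex sets, one of which is contained in the affine set:
`A ∩ conv(B ∪ C) = conv((A ∩ B) ∪ C)`. -/
theorem affine_inter_convexHull (d : ℕ) (A : AffineSubspace ℝ (Fin d → ℝ))
    (B C : Set (Fin d → ℝ)) (hB : Convex ℝ B) (hC : Convex ℝ C)
    (hCA : C ⊆ (A : Set (Fin d → ℝ))) :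
    (A : Set (Fin d → ℝ)) ∩ convexHull ℝ (B ∪ C)
      = convexHull ℝ (((A : Set (Fin d → ℝ)) ∩ B) ∪ C) := by
  apply subset_antisymm
  · rintro x ⟨hxA, hx⟩
    rcases B.eq_empty_or_nonempty with rfl | hB₀
    · simpa using hx
    rcases C.eq_empty_or_nonempty with rfl | hC₀
    · rw [Set.union_empty, hB.convexHull_eq] at hx
      exact subset_convexHull ℝ _ (Or.inl ⟨hxA, hx⟩)
    rw [hB.convexHull_union hC hB₀ hC₀, mem_convexJoin] at hx
    obtain ⟨b, hb, c, hc, s, t, hs, ht, hst, rfl⟩ := hx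
    rcases hs.eq_or_lt with rfl | hs_pos
    · obtain rfl : t = 1 := by linarith
      exact subset_convexHull ℝ _ (Or.inr (by simpa using hc))
    -- `b` lies on the line through `c` and the given point, both of which are in `A`.
    have hbA : b ∈ A := by
      have h := AffineMap.lineMap_mem s⁻¹ (hCA hc) hxA
      obtain rfl : t = 1 - s := by linarith
      convert h using 1
      ext i
      simp only [AffineMap.lineMap_apply, vsub_eq_sub, vadd_eq_add, Pi.add_apply,
        Pi.smul_apply, Pi.sub_apply, smul_eq_mul]
      field_simp
      ring
    exact convexJoin_subset_convexHull _ _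
      (mem_convexJoin.2 ⟨b, ⟨hbA, hb⟩, c, hc, s, t, hs, ht, hst, rfl⟩)
  · refine convexHull_min ?_ (A.convex.inter (convex_convexHull ℝ _))
    rintro x (⟨hxA, hxB⟩ | hxC)
    · exact ⟨hxA, subset_convexHull ℝ _ (Or.inl hxB)⟩
    · exact ⟨hCA hxC, subset_convexHull ℝ _ (Or.inr hxC)⟩
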